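/- Let (x̄, ȳ) ∈ X × Y(x̄) with X ⊆ ℝⁿ closed and Y : ℝⁿ ⇉ ℝᵐ closed-valued. Suppose f is twice semidifferentiable at (x̄, ȳ), and Y is semidifferentiable at x̄ for ȳ and calm around (x̄, ȳ). Assume: (1) sup_{h ∈ DY(x̄,ȳ)(u)} df(x̄,ȳ)(u,h) ≥ 0 for all u ∈ T_X(x̄) and d_y f(x̄,ȳ)(h) ≤ 0 for all h ∈ T_{Y(x̄)}(ȳ); (2) d²_{yy} f(x̄,ȳ)(h) − d²δ_{Y(x̄)}(ȳ; d_y f(x̄,ȳ))(h) < 0 for all h ∈ T_{Y(x̄)}(ȳ) ∩ {h' : d_y f(x̄,ȳ)(h') = 0} \ {0}; (3) for every u ∈ T_X(x̄) ∩ {u : max_{h' ∈ DY(x̄,ȳ)(u)} df(x̄,ȳ)(u,h') = 0}, there exist −vᵘ ∈ N_X(x̄) ∩ {u}^⊥ and (ξ₁ᵘ, ξ₂ᵘ) ∈ N_{gph Y}(x̄,ȳ) with ⟨(vᵘ,0)+(ξ₁ᵘ,ξ₂ᵘ),(u',h')⟩ = df(x̄,ȳ)(u',h') for all (u',h'), d²δ_X(x̄;−vᵘ)(u)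 is finite, d²δ_{gph Y}((x̄,ȳ); df(x̄,ȳ))(u,h) is finite for every h ∈ C(x̄,ȳ;u), and δ_{gph Y} is strongly twice epi-differentiable at (x̄,ȳ) for (ξ₁ᵘ,ξ₂ᵘ); (4) for every u ∈ T_X(x̄) ∩ {u : max_{h' ∈ DY(x̄,ȳ)(u)} df(x̄,ȳ)(u,h') = 0} \ {0}: sup_{h ∈ C(x̄,ȳ;u)} { d²f(x̄,ȳ)(u,h) + d²δ_X(x̄;−vᵘ)(u) − d²δ_{gph Y}((x̄,ȳ); df(x̄,ȳ))(u,h) } > 0. Then (x̄, ȳ) is a calm local minimax point of min_{x∈X} max_{y∈Y(x)} f(x,y) and the second-order growth condition holds: there exist δ₀ > 0, ε > 0, μ > 0, κ > 0 such that for all x ∈ X ∩ 𝔹_{δ₀}(x̄) and y ∈ Y(x̄) ∩ 𝔹_{δ₀}(ȳ): f(x̄, y) + ε‖y − ȳ‖² ≤ f(x̄, ȳ) ≤ max_{y' ∈ Y(x) ∩ 𝔹_{κ‖x−x̄‖}(ȳ)} f(x, y') − μ‖x − x̄‖². -/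

import Mathlib

open Filter Topology Set Metric Classical
open scoped RealInnerProductSpace

noncomputable section

/-- Euclidean space ℝ^n. -/
abbrev Eu (n : ℕ) := EuclideanSpace ℝ (Fin n)

/-- The filter describing `t ↓ 0, w' → w`. -/
def quotFilter {E : Type*} [TopologicalSpace E] (w : E) : Filter (ℝ × E) :=
  (𝓝[>] (0 : ℝ)) ×ˢ 𝓝 w

section Normed

variable {E F : Type*} [NormedAddCommGroup E] [NormedSpace ℝ E]
  [NormedAddCommGroup F] [NormedSpace ℝ F]

/-- Subderivative `dψ(z)(w) = liminf_{t↓0, w'→w} (ψ(z+tw')-ψ(z))/t`, in `EReal`. -/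
def dsub (ψ : E → ℝ) (z w : E) : EReal :=
  liminf (fun p : ℝ × E => (((ψ (z + p.1 • p.2) - ψ z) / p.1 : ℝ) : EReal)) (quotFilter w)

/-- Superderivative `d⁺ψ(z)(w) = limsup_{t↓0, w'→w} (ψ(z+tw')-ψ(z))/t`, in `EReal`. -/
def dsup (ψ : E → ℝ) (z w : E) : EReal :=
  limsup (fun p : ℝ × E => (((ψ (z + p.1 • p.2) - ψ z) / p.1 : ℝ) : EReal)) (quotFilter w)

/-- `ψ` is semidifferentiable at `z`: for every `w` the limit of the difference
quotients exists (as a real number). -/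
def SemidiffAt (ψ : E → ℝ) (z : E) : Prop :=
  ∀ w, ∃ L : ℝ,
    Tendsto (fun p : ℝ × E => (ψ (z + p.1 • p.2) - ψ z) / p.1) (quotFilter w) (𝓝 L)

/-- Second subderivative `d²ψ(z)(w)` (without mention of a vector), in `EReal`. -/
def d2sub (ψ : E → ℝ) (z w : E) : EReal :=
  liminf (fun p : ℝ × E =>
      (((ψ (z + p.1 • p.2) - ψ z - p.1 * (dsub ψ z p.2).toReal) / (p.1 ^ 2 / 2) : ℝ) : EReal))
    (quotFilter w)

/-- `ψ` is twice semidifferentiable at `z`. -/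
def TwiceSemidiffAt (ψ : E → ℝ) (z : E) : Prop :=
  SemidiffAt ψ z ∧ ∀ w, ∃ Q : ℝ,
    Tendsto (fun p : ℝ × E =>
        (ψ (z + p.1 • p.2) - ψ z - p.1 * (dsub ψ z p.2).toReal) / (p.1 ^ 2 / 2))
      (quotFilter w) (𝓝 Q)

/-- Second subderivative of the indicator function `δ_S` at `z` for the
(pre-)derivative function `d` and direction `w`:
`liminf_{t↓0, w'→w} (δ_S(z+tw') - t d(w'))/(t²/2)`. -/
def d2IndSub (S : Set E) (d : E → ℝ) (z w : E) : EReal :=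
  liminf (fun p : ℝ × E =>
      if z + p.1 • p.2 ∈ S then (((-(p.1 * d p.2)) / (p.1 ^ 2 / 2) : ℝ) : EReal)
      else (⊤ : EReal))
    (quotFilter w)

/-- Tangent (contingent) cone via sequences. -/
def tCone (S : Set E) (z : E) : Set E :=
  {w | ∃ (t : ℕ → ℝ) (w' : ℕ → E), (∀ k, 0 < t k) ∧ Tendsto t atTop (𝓝 0) ∧
    Tendsto w' atTop (𝓝 w) ∧ ∀ k, z + t k • w' k ∈ S}

/-- Inner tangent cone via sequences. -/
def innerTCone (S : Set E) (z : E) : Set E :=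
  {w | ∀ t : ℕ → ℝ, (∀ k, 0 < t k) → Tendsto t atTop (𝓝 0) →
    ∃ w' : ℕ → E, Tendsto w' atTop (𝓝 w) ∧ ∀ k, z + t k • w' k ∈ S}

/-- A set is geometrically derivable if tangent and inner tangent cones coincide
at every point of the set. -/
def GeomDerivable (S : Set E) : Prop := ∀ z ∈ S, tCone S z = innerTCone S z

/-- Graphical derivative (Painlevé–Kuratowski outer limit of difference quotients). -/
def graphDeriv (Y : E → Set F) (xb : E) (yb : F) (u : E) : Set F :=
  {h | ∃ (t : ℕ → ℝ) (u' : ℕ → E) (h' : ℕ → F),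
    (∀ k, 0 < t k) ∧ Tendsto t atTop (𝓝 0) ∧ Tendsto u' atTop (𝓝 u) ∧
    Tendsto h' atTop (𝓝 h) ∧ ∀ k, yb + t k • h' k ∈ Y (xb + t k • u' k)}

/-- Painlevé–Kuratowski inner limit of the difference quotients of a set-valued map. -/
def innerDeriv (Y : E → Set F) (xb : E) (yb : F) (u : E) : Set F :=
  {h | ∀ (t : ℕ → ℝ) (u' : ℕ → E), (∀ k, 0 < t k) → Tendsto t atTop (𝓝 0) →
    Tendsto u' atTop (𝓝 u) →
    ∃ h' : ℕ → F, Tendsto h' atTop (𝓝 h) ∧ ∀ k, yb + t k • h' k ∈ Y (xb + t k • u' k)}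

/-- `Y` is semidifferentiable at `xb` for `yb`: for every `u` the limit of the
difference quotient sets exists, i.e. outer and inner limits coincide. -/
def SetSemidiffAt (Y : E → Set F) (xb : E) (yb : F) : Prop :=
  ∀ u, graphDeriv Y xb yb u = innerDeriv Y xb yb u

/-- `Y` is calm around `(xb, yb)`. -/
def SetCalmAround (Y : E → Set F) (xb : E) (yb : F) : Prop :=
  ∃ l > (0 : ℝ), ∃ U ∈ 𝓝 xb, ∃ V ∈ 𝓝 yb, ∀ x ∈ U, ∀ y ∈ Y x ∩ V, ‖y - yb‖ ≤ l * ‖x - xb‖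

/-- `Y` is Lipschitz-like (Aubin property) around `(xb, yb)`. -/
def SetLipschitzLikeAround (Y : E → Set F) (xb : E) (yb : F) : Prop :=
  ∃ l > (0 : ℝ), ∃ U ∈ 𝓝 xb, ∃ V ∈ 𝓝 yb, ∀ x ∈ U, ∀ x' ∈ U, ∀ y ∈ Y x ∩ V,
    ∃ y' ∈ Y x', ‖y - y'‖ ≤ l * ‖x - x'‖

/-- Inner calmness of a set-valued map at `(xb, yb)` with respect to `X`. -/
def InnerCalmOn (Γ : E → Set F) (X : Set E) (xb : E) (yb : F) : Prop :=
  ∃ κ > (0 : ℝ), ∃ δ₀ > (0 : ℝ), ∀ x ∈ X ∩ closedBall xb δ₀,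
    ∃ y ∈ Γ x, ‖y - yb‖ ≤ κ * ‖x - xb‖

/-- Value of the (localized) maximization `max_{y ∈ A} f(x, y)`. -/
def maxVal (f : E × F → ℝ) (x : E) (A : Set F) : ℝ := sSup ((fun y => f (x, y)) '' A)

/-- Solution set of the maximization `max_{y ∈ A} f(x, y)`. -/
def argmaxSet (f : E × F → ℝ) (x : E) (A : Set F) : Set F :=
  {y ∈ A | ∀ y' ∈ A, f (x, y') ≤ f (x, y)}

/-- The defining inequalities of a local minimax point, for radius `δ₀` and radius
function `τ`. -/
def MinimaxIneq (f : E × F → ℝ) (X : Set E) (Y : E → Set F) (xb : E) (yb : F)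
    (δ₀ : ℝ) (τ : ℝ → ℝ) : Prop :=
  ∀ δ ∈ Ioc (0 : ℝ) δ₀, ∀ x ∈ X ∩ closedBall xb δ, ∀ y ∈ Y xb ∩ closedBall yb δ,
    f (xb, y) ≤ f (xb, yb) ∧ f (xb, yb) ≤ maxVal f x (Y x ∩ closedBall yb (τ δ))

/-- Local minimax point. -/
def IsLocalMinimaxPt (f : E × F → ℝ) (X : Set E) (Y : E → Set F) (xb : E) (yb : F) : Prop :=
  xb ∈ X ∧ yb ∈ Y xb ∧ ∃ δ₀ > (0 : ℝ), ∃ τ : ℝ → ℝ, (∀ δ, 0 ≤ τ δ) ∧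
    Tendsto τ (𝓝[>] (0 : ℝ)) (𝓝 0) ∧ MinimaxIneq f X Y xb yb δ₀ τ

/-- Calm local minimax point: a local minimax point whose radius function is calm at 0. -/
def IsCalmLocalMinimaxPt (f : E × F → ℝ) (X : Set E) (Y : E → Set F) (xb : E) (yb : F) : Prop :=
  xb ∈ X ∧ yb ∈ Y xb ∧ ∃ δ₀ > (0 : ℝ), ∃ τ : ℝ → ℝ, (∀ δ, 0 ≤ τ δ) ∧
    Tendsto τ (𝓝[>] (0 : ℝ)) (𝓝 0) ∧ (∃ κ > (0 : ℝ), ∀ δ ≥ (0 : ℝ), τ δ ≤ κ * δ) ∧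
    MinimaxIneq f X Y xb yb δ₀ τ

/-- Second-order growth condition at a (calm local) minimax point. -/
def SecondOrderGrowth (f : E × F → ℝ) (X : Set E) (Y : E → Set F) (xb : E) (yb : F) : Prop :=
  ∃ δ₀ > (0 : ℝ), ∃ ε > (0 : ℝ), ∃ μ > (0 : ℝ), ∃ κ > (0 : ℝ),
    ∀ x ∈ X ∩ closedBall xb δ₀, ∀ y ∈ Y xb ∩ closedBall yb δ₀,
      f (xb, y) + ε * ‖y - yb‖ ^ 2 ≤ f (xb, yb) ∧
      f (xb, yb) ≤ maxVal f x (Y x ∩ closedBall yb (κ * ‖x - xb‖)) - μ * ‖x - xb‖ ^ 2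

end Normed

section InnerP

variable {E F : Type*} [NormedAddCommGroup E] [InnerProductSpace ℝ E]
  [NormedAddCommGroup F] [InnerProductSpace ℝ F]

/-- Second subderivative of the indicator `δ_S` at `z` for a vector `v` and direction `w`. -/
def d2IndVec (S : Set E) (z v w : E) : EReal :=
  d2IndSub S (fun w' => ⟪v, w'⟫) z w

/-- Regular (Fréchet) normal cone, via polarity with the tangent cone. -/
def regNCone (S : Set E) (z : E) : Set E :=
  {v | ∀ w ∈ tCone S z, ⟪v, w⟫ ≤ 0}

/-- Limiting (Mordukhovich) normal cone. -/
def limNCone (S : Set E) (z : E) : Set E :=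
  {v | ∃ (zk : ℕ → E) (vk : ℕ → E), (∀ k, zk k ∈ S) ∧ Tendsto zk atTop (𝓝 z) ∧
    Tendsto vk atTop (𝓝 v) ∧ ∀ k, vk k ∈ regNCone S (zk k)}

/-- Normal cone of convex analysis. -/
def convNCone (D : Set E) (d : E) : Set E :=
  {v | ∀ z ∈ D, ⟪v, z - d⟫ ≤ 0}

/-- The inner product on a product of inner product spaces (ℓ²-pairing). -/
def pairInner (a b : E × F) : ℝ := ⟪a.1, b.1⟫ + ⟪a.2, b.2⟫

/-- Regular (Fréchet) normal cone for subsets of a product space. -/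
def regNConeP (S : Set (E × F)) (z : E × F) : Set (E × F) :=
  {v | ∀ w ∈ tCone S z, pairInner v w ≤ 0}

/-- Limiting normal cone for subsets of a product space. -/
def limNConeP (S : Set (E × F)) (z : E × F) : Set (E × F) :=
  {v | ∃ (zk : ℕ → E × F) (vk : ℕ → E × F), (∀ k, zk k ∈ S) ∧ Tendsto zk atTop (𝓝 z) ∧
    Tendsto vk atTop (𝓝 v) ∧ ∀ k, vk k ∈ regNConeP S (zk k)}

end InnerP

/-- Graph of a set-valued map. -/
def gphSet {E F : Type*} (Y : E → Set F) : Set (E × F) := {p : E × F | p.2 ∈ Y p.1}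

/-- `δ_S` (indicator of `S ⊆ E × F`) is strongly twice epi-differentiable at `z` for the
linear functional represented by `d` (namely `w ↦ ⟨ξ, w⟩`). -/
def StrongTwiceEpiDiffInd {E F : Type*} [NormedAddCommGroup E] [NormedSpace ℝ E]
    [NormedAddCommGroup F] [NormedSpace ℝ F]
    (S : Set (E × F)) (z : E × F) (d : E × F → ℝ) : Prop :=
  ∀ (u : E) (h : F) (t : ℕ → ℝ) (uk : ℕ → E),
    (∀ k, 0 < t k) → Filter.Tendsto t atTop (𝓝 0) → Filter.Tendsto uk atTop (𝓝 u) →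
    ∃ hk : ℕ → F, Filter.Tendsto hk atTop (𝓝 h) ∧
      Filter.Tendsto (fun k =>
          if z + t k • (uk k, hk k) ∈ S then
            (((-(t k * d (uk k, hk k))) / (t k ^ 2 / 2) : ℝ) : EReal)
          else (⊤ : EReal))
        atTop (𝓝 (d2IndSub S d z (u, h)))

/-!
Write `z = (xb, yb)`. Calmness isolates `yb` in `Y xb`, so only the outer inequality is at stake.
By compactness of the unit sphere it suffices to find, along every sequence `xb + t w` of `X` with
`t ↓ 0` and `w → u ≠ 0`, points `y ∈ Y (xb + t w)` at which `f` has grown by a multiple of `t ^ 2`;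
calmness keeps them within a fixed multiple of `t` of `yb`.

If some `h ∈ DY(u)` has `df(u, h) > 0`, semidifferentiability of `Y` follows `h` and `f` grows
linearly. Otherwise `u` is critical, with `df = ℓ + ξ` and `ℓ u = 0`. Here `ℓ` has to vanish: if
`ℓ e = 1`, strong twice epi-differentiability in the zero direction provides points of the graph
over `xb + r ^ 3 • (u + r • e)` with `ξ ≥ -r / 2`, hence `df ≥ r / 2`, while a step of length
`r ^ 3` tolerates only `df = O(r ^ 3)` before the second subderivative of `δ_{gph Y}` drops to
`-∞`. With `ℓ = 0`, strong twice epi-differentiability in the direction `(u, h)` of condition (4)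
provides points along which `f` grows quadratically.
-/

theorem ite_top_lt_coe_iff {p : Prop} [Decidable p] {a c : ℝ} :
    (if p then (a : EReal) else ⊤) < c ↔ p ∧ a < c := by
  split_ifs with hp <;> simp [hp]

theorem lt_of_pos_add_sub {a b c : EReal} (hb : b ≤ 0) (h : 0 < a + b - c) : c < a := by
  contrapose! h
  calc a + b - c ≤ c + 0 - c := EReal.sub_le_sub (add_le_add h hb) le_rfl
    _ ≤ 0 := by rw [add_zero]; exact EReal.sub_self_le_zero

section QuotFilter

variable {E : Type*} [TopologicalSpace E]

instance quotFilter.instNeBot (w : E) : (quotFilter w).NeBot := by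
  unfold quotFilter; infer_instance

theorem tendsto_quotFilter {t : ℕ → ℝ} {w : ℕ → E} {u : E} (ht : ∀ k, 0 < t k)
    (ht0 : Tendsto t atTop (𝓝 0)) (hw : Tendsto w atTop (𝓝 u)) :
    Tendsto (fun k ↦ (t k, w k)) atTop (quotFilter u) :=
  (tendsto_nhdsWithin_iff.2 ⟨ht0, Eventually.of_forall ht⟩).prodMk hw

theorem eventually_fst_pos_quotFilter (w : E) : ∀ᶠ p in quotFilter w, (0 : ℝ) < p.1 :=
  tendsto_fst.eventually self_mem_nhdsWithin

theorem tendsto_fst_quotFilter (w : E) : Tendsto Prod.fst (quotFilter w) (𝓝 (0 : ℝ)) :=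
  tendsto_fst.mono_right nhdsWithin_le_nhds

end QuotFilter

section FunctionSubderivative

variable {E : Type*} [NormedAddCommGroup E] [NormedSpace ℝ E]

theorem SemidiffAt.isBoundedUnder_le {ψ : E → ℝ} {z : E} (hψ : SemidiffAt ψ z) :
    IsBoundedUnder (· ≤ ·) (𝓝 z) ψ := by
  obtain ⟨L, hL⟩ := hψ 0
  have hquot : ∀ᶠ t in 𝓝[>] (0 : ℝ), ∀ᶠ q in 𝓝 (0 : E), (ψ (z + t • q) - ψ z) / t < L + 1 :=
    (hL.eventually (gt_mem_nhds (lt_add_one L))).curry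
  obtain ⟨t, hqt, ht⟩ := (hquot.and self_mem_nhdsWithin).exists
  have htendsto : Tendsto (fun x ↦ t⁻¹ • (x - z)) (𝓝 z) (𝓝 0) := by
    have : Continuous fun x ↦ t⁻¹ • (x - z) := by fun_prop
    simpa only [sub_self, smul_zero] using this.tendsto z
  refine isBoundedUnder_of_eventually_le (a := ψ z + (L + 1) * t) ?_
  filter_upwards [htendsto.eventually hqt] with x hx
  rw [smul_inv_smul₀ (mem_Ioi.1 ht).ne', add_sub_cancel, div_lt_iff₀ ht] at hx
  linarith

theorem eventually_add_mul_sq_le_of_dsub_pos {ψ : E → ℝ} {z w : E} (hw : 0 < dsub ψ z w) (M : ℝ) :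
    ∀ᶠ p in quotFilter w, ψ z + M * p.1 ^ 2 ≤ ψ (z + p.1 • p.2) := by
  obtain ⟨c, hc0, hc⟩ := EReal.lt_iff_exists_real_btwn.1 hw
  have hsmall : ∀ᶠ p in quotFilter w, M * p.1 < c := by
    have hM : Tendsto (fun p : ℝ × E ↦ M * p.1) (quotFilter w) (𝓝 0) := by
      simpa only [mul_zero] using (tendsto_fst_quotFilter w).const_mul M
    exact hM.eventually (gt_mem_nhds (EReal.coe_pos.1 hc0))
  filter_upwards [eventually_lt_of_lt_liminf hc, hsmall, eventually_fst_pos_quotFilter w]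
    with p hquot hM hp
  rw [EReal.coe_lt_coe_iff, lt_div_iff₀ hp] at hquot
  nlinarith

end FunctionSubderivative

section IndicatorSubderivative

variable {E : Type*} [NormedAddCommGroup E] [NormedSpace ℝ E] {S : Set E} {d : E → ℝ} {z u : E}
  {t : ℕ → ℝ} {w : ℕ → E}

theorem d2IndSub_nonpos (ht : ∀ k, 0 < t k) (ht0 : Tendsto t atTop (𝓝 0))
    (hw : Tendsto w atTop (𝓝 u)) (hS : ∀ k, z + t k • w k ∈ S) (hd : ∀ k, 0 ≤ d (w k)) :
    d2IndSub S d z u ≤ 0 := by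
  refine liminf_le_of_frequently_le' ((tendsto_quotFilter ht ht0 hw).frequently
    (Frequently.of_forall fun k ↦ ?_))
  rw [if_pos (hS k), EReal.coe_nonpos]
  have := mul_nonneg (ht k).le (hd k)
  exact div_nonpos_of_nonpos_of_nonneg (by linarith) (by positivity)

theorem d2IndSub_eq_bot (ht : ∀ k, 0 < t k) (ht0 : Tendsto t atTop (𝓝 0))
    (hw : Tendsto w atTop (𝓝 u)) (hS : ∀ᶠ k in atTop, z + t k • w k ∈ S)
    (hd : Tendsto (fun k ↦ d (w k) / t k) atTop atTop) : d2IndSub S d z u = ⊥ := by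
  refine (EReal.eq_bot_iff_forall_lt _).2 fun c ↦ ?_
  refine lt_of_le_of_lt (liminf_le_of_frequently_le' (x := ((c - 1 : ℝ) : EReal))
    ((tendsto_quotFilter ht ht0 hw).frequently (Eventually.frequently ?_)))
    (EReal.coe_lt_coe_iff.2 (sub_one_lt c))
  filter_upwards [hS, hd.eventually_ge_atTop (-(c - 1) / 2)] with k hk hdk
  rw [if_pos hk, EReal.coe_le_coe_iff]
  have htk := (ht k).ne'
  calc -(t k * d (w k)) / (t k ^ 2 / 2) = -2 * (d (w k) / t k) := by field_simp
    _ ≤ c - 1 := by linarith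

theorem exists_eventually_add_mul_sq_le {ψ : E → ℝ} {a : EReal} (ht : ∀ k, 0 < t k)
    (ht0 : Tendsto t atTop (𝓝 0)) (hw : Tendsto w atTop (𝓝 u))
    (hS : Tendsto (fun k ↦ if z + t k • w k ∈ S then
      ((-(t k * (dsub ψ z (w k)).toReal) / (t k ^ 2 / 2) : ℝ) : EReal) else ⊤) atTop (𝓝 a))
    (ha : a < d2sub ψ z u) :
    ∃ μ > 0, ∀ᶠ k in atTop, z + t k • w k ∈ S ∧ ψ z + μ * t k ^ 2 ≤ ψ (z + t k • w k) := by
  obtain ⟨b, hab, hb⟩ := EReal.lt_iff_exists_real_btwn.1 ha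
  obtain ⟨c, hbc, hc⟩ := EReal.lt_iff_exists_real_btwn.1 hb
  rw [EReal.coe_lt_coe_iff] at hbc
  refine ⟨(c - b) / 2, by linarith, ?_⟩
  filter_upwards [hS.eventually (gt_mem_nhds hab),
    (tendsto_quotFilter ht ht0 hw).eventually (eventually_lt_of_lt_liminf hc)] with k hSk hψk
  obtain ⟨hmem, hSk⟩ := ite_top_lt_coe_iff.1 hSk
  have htk : 0 < t k ^ 2 / 2 := by have := ht k; positivity
  rw [EReal.coe_lt_coe_iff, lt_div_iff₀ htk] at hψk
  rw [div_lt_iff₀ htk] at hSk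
  -- The first-order terms of the two quotients cancel.
  exact ⟨hmem, by linarith⟩

end IndicatorSubderivative

section Calm

variable {E F : Type*} [NormedAddCommGroup E] [NormedAddCommGroup F]
  {Y : E → Set F} {xb : E} {yb : F}

theorem SetCalmAround.exists_eventually_norm_sub_le [NormedSpace ℝ E] [NormedSpace ℝ F]
    (hY : SetCalmAround Y xb yb) :
    ∃ κ > 0, ∀ᶠ p in 𝓝 (xb, yb), p ∈ gphSet Y → ‖p.2 - yb‖ ≤ κ * ‖p.1 - xb‖ := by
  obtain ⟨κ, hκ, U, hU, V, hV, hUV⟩ := hY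
  refine ⟨κ, hκ, ?_⟩
  filter_upwards [prod_mem_nhds hU hV] with p hp hpY
  exact hUV p.1 hp.1 p.2 ⟨hpY, hp.2⟩

theorem eventually_eq_of_calm {κ : ℝ}
    (hY : ∀ᶠ p in 𝓝 (xb, yb), p ∈ gphSet Y → ‖p.2 - yb‖ ≤ κ * ‖p.1 - xb‖) :
    ∀ᶠ y in 𝓝 yb, y ∈ Y xb → y = yb := by
  have hpair : Tendsto (fun y ↦ (xb, y)) (𝓝 yb) (𝓝 (xb, yb)) := by
    exact (Continuous.prodMk_right xb).tendsto yb
  filter_upwards [hpair.eventually hY] with y hy hyY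
  simpa [sub_eq_zero] using hy hyY

end Calm

section GraphDeriv

variable {E F : Type*} [NormedAddCommGroup E] [NormedSpace ℝ E]
  [NormedAddCommGroup F] [NormedSpace ℝ F] {Y : E → Set F} {xb u : E} {yb : F}
  {t : ℕ → ℝ} {w : ℕ → E} {g : ℕ → F}

theorem mem_graphDeriv_of_eventually {h : F} (ht : ∀ k, 0 < t k) (ht0 : Tendsto t atTop (𝓝 0))
    (hw : Tendsto w atTop (𝓝 u)) (hg : Tendsto g atTop (𝓝 h))
    (hY : ∀ᶠ k in atTop, (xb, yb) + t k • (w k, g k) ∈ gphSet Y) : h ∈ graphDeriv Y xb yb u := by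
  obtain ⟨N, hN⟩ := eventually_atTop.1 hY
  have hshift := tendsto_add_atTop_nat N
  exact ⟨fun k ↦ t (k + N), fun k ↦ w (k + N), fun k ↦ g (k + N), fun _ ↦ ht _,
    ht0.comp hshift, hw.comp hshift, hg.comp hshift, fun k ↦ hN _ (Nat.le_add_left N k)⟩

theorem SetCalmAround.exists_subseq_tendsto_mem_graphDeriv [ProperSpace F]
    (hY : SetCalmAround Y xb yb) (ht : ∀ k, 0 < t k) (ht0 : Tendsto t atTop (𝓝 0))
    (hw : Tendsto w atTop (𝓝 u)) (hg : Tendsto (fun k ↦ t k • g k) atTop (𝓝 0))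
    (hmem : ∀ᶠ k in atTop, (xb, yb) + t k • (w k, g k) ∈ gphSet Y) :
    ∃ h ∈ graphDeriv Y xb yb u, ∃ φ : ℕ → ℕ, StrictMono φ ∧ Tendsto (g ∘ φ) atTop (𝓝 h) := by
  obtain ⟨κ, hκ, hκY⟩ := hY.exists_eventually_norm_sub_le
  have hlim : Tendsto (fun k ↦ (xb, yb) + t k • (w k, g k)) atTop (𝓝 (xb, yb)) := by
    have htw : Tendsto (fun k ↦ t k • w k) atTop (𝓝 0) := by simpa using ht0.smul hw
    simpa using (htw.prodMk_nhds hg).const_add (xb, yb)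
  have hbdd : ∀ᶠ k in atTop, g k ∈ closedBall (0 : F) (κ * (‖u‖ + 1)) := by
    filter_upwards [hmem, hlim.eventually hκY, hw.norm.eventually_le_const (lt_add_one ‖u‖)]
      with k hk hcalm hwk
    have hle : ‖t k • g k‖ ≤ κ * ‖t k • w k‖ := by simpa using hcalm hk
    rw [norm_smul_of_nonneg (ht k).le, norm_smul_of_nonneg (ht k).le, mul_left_comm] at hle
    rw [mem_closedBall_zero_iff]
    calc ‖g k‖ ≤ κ * ‖w k‖ := le_of_mul_le_mul_left hle (ht k)
      _ ≤ κ * (‖u‖ + 1) := by gcongr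
  obtain ⟨h, -, φ, hφ, hh⟩ := tendsto_subseq_of_frequently_bounded isBounded_closedBall
    hbdd.frequently
  have hφ' := hφ.tendsto_atTop
  exact ⟨h, mem_graphDeriv_of_eventually (fun k ↦ ht (φ k)) (ht0.comp hφ') (hw.comp hφ') hh
    (hφ'.eventually hmem), φ, hφ, hh⟩

end GraphDeriv

section Multiplier

variable {E F : Type*} [NormedAddCommGroup E] [NormedSpace ℝ E]
  [NormedAddCommGroup F] [NormedSpace ℝ F]

theorem StrongTwiceEpiDiffInd.exists_seq_tendsto_zero {S : Set (E × F)} {z : E × F} {d : E × F → ℝ}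
    (hstrong : StrongTwiceEpiDiffInd S z d) (hz : z ∈ S) (hd : 0 ≤ d 0) {t : ℕ → ℝ} {w : ℕ → E}
    (ht : ∀ k, 0 < t k) (ht0 : Tendsto t atTop (𝓝 0)) (hw : Tendsto w atTop (𝓝 0)) :
    ∃ g : ℕ → F, Tendsto g atTop (𝓝 0) ∧
      ∀ᶠ k in atTop, z + t k • (w k, g k) ∈ S ∧ -(t k / 2) ≤ d (w k, g k) := by
  obtain ⟨g, hg, hquot⟩ := hstrong 0 0 t w ht ht0 hw
  have hzero : d2IndSub S d z (0, 0) < (1 : ℝ) :=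
    (d2IndSub_nonpos ht ht0 tendsto_const_nhds (fun k ↦ by simpa using hz) fun _ ↦ hd).trans_lt
      (by norm_num)
  refine ⟨g, hg, ?_⟩
  filter_upwards [hquot.eventually (gt_mem_nhds hzero)] with k hk
  obtain ⟨hmem, hlt⟩ := ite_top_lt_coe_iff.1 hk
  have htk := ht k
  rw [div_lt_iff₀ (by positivity)] at hlt
  have : t k * -(t k / 2) ≤ t k * d (w k, g k) := by linarith
  exact ⟨hmem, le_of_mul_le_mul_left this htk⟩

theorem StrongTwiceEpiDiffInd.exists_seq_cube {S : Set (E × F)} {z : E × F}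
    {ξ : E × F →L[ℝ] ℝ} (hstrong : StrongTwiceEpiDiffInd S z ξ) (hz : z ∈ S)
    {r : ℕ → ℝ} {w : ℕ → E} {u : E} (hr : ∀ k, 0 < r k) (hr0 : Tendsto r atTop (𝓝 0))
    (hw : Tendsto w atTop (𝓝 u)) :
    ∃ g : ℕ → F, Tendsto (fun k ↦ r k • g k) atTop (𝓝 0) ∧
      ∀ᶠ k in atTop, z + r k ^ 3 • (w k, g k) ∈ S ∧ -(r k / 2) ≤ ξ (w k, g k) := by
  have hr2 : Tendsto (fun k ↦ r k ^ 2) atTop (𝓝 0) := by simpa using hr0.pow 2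
  have hrw : Tendsto (fun k ↦ r k • w k) atTop (𝓝 0) := by simpa using hr0.smul hw
  obtain ⟨g, hg, hgS⟩ := hstrong.exists_seq_tendsto_zero hz (map_zero ξ).ge
    (fun k ↦ pow_pos (hr k) 2) hr2 hrw
  refine ⟨fun k ↦ (r k)⁻¹ • g k, by simpa only [smul_inv_smul₀ (hr _).ne'] using hg, ?_⟩
  filter_upwards [hgS] with k hk
  have hfactor : (r k • w k, g k) = r k • (w k, (r k)⁻¹ • g k) := by
    rw [Prod.smul_mk, smul_inv_smul₀ (hr k).ne']
  rw [hfactor, smul_smul, ← pow_succ, map_smul, smul_eq_mul] at hk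
  refine ⟨hk.1, le_of_mul_le_mul_left ?_ (hr k)⟩
  linarith [hk.2]

theorem StrongTwiceEpiDiffInd.exists_d2IndSub_eq_bot [ProperSpace F] {Y : E → Set F} {xb u : E}
    {yb : F} {ℓ : E →L[ℝ] ℝ} {ξ : E × F →L[ℝ] ℝ}
    (hstrong : StrongTwiceEpiDiffInd (gphSet Y) (xb, yb) ξ) (hyb : yb ∈ Y xb)
    (hcalm : SetCalmAround Y xb yb) (hℓ : ℓ ≠ 0) (hℓu : ℓ u = 0) :
    ∃ h ∈ graphDeriv Y xb yb u, 0 ≤ ξ (u, h) ∧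
      d2IndSub (gphSet Y) (fun p ↦ ℓ p.1 + ξ p) (xb, yb) (u, h) = ⊥ := by
  obtain ⟨e, he⟩ : ∃ e, ℓ e = 1 :=
    LinearMap.surjective (f := ℓ.toLinearMap) (by exact_mod_cast hℓ) 1
  obtain ⟨r, -, hr, hr0⟩ := exists_seq_strictAnti_tendsto (0 : ℝ)
  set w : ℕ → E := fun k ↦ u + r k • e
  have hw : Tendsto w atTop (𝓝 u) := by simpa using (hr0.smul_const e).const_add u
  have hℓw (k : ℕ) : ℓ (w k) = r k := by simp [w, hℓu, he]
  obtain ⟨g, hg, hgY⟩ := hstrong.exists_seq_cube hyb hr hr0 hw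
  have hr3 (k : ℕ) : 0 < r k ^ 3 := pow_pos (hr k) 3
  have hr3lim : Tendsto (fun k ↦ r k ^ 3) atTop (𝓝 0) := by simpa using hr0.pow 3
  have hr3g : Tendsto (fun k ↦ r k ^ 3 • g k) atTop (𝓝 0) := by
    simpa [smul_smul, ← pow_succ] using (hr0.pow 2).smul hg
  obtain ⟨h, hhY, φ, hφ, hh⟩ := hcalm.exists_subseq_tendsto_mem_graphDeriv hr3 hr3lim hw hr3g
    (hgY.mono fun k hk ↦ hk.1)
  have hφ' := hφ.tendsto_atTop
  have hwh : Tendsto (fun k ↦ (w (φ k), g (φ k))) atTop (𝓝 (u, h)) :=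
    (hw.comp hφ').prodMk_nhds hh
  have hξ : ∀ᶠ k in atTop, -(r (φ k) / 2) ≤ ξ (w (φ k), g (φ k)) :=
    hφ'.eventually (hgY.mono fun k hk ↦ hk.2)
  refine ⟨h, hhY, ?_, ?_⟩
  · have hlim : Tendsto (fun k ↦ -(r (φ k) / 2)) atTop (𝓝 0) := by
      simpa using ((hr0.comp hφ').div_const 2).neg
    exact le_of_tendsto_of_tendsto hlim ((ξ.continuous.tendsto _).comp hwh) hξ
  · refine d2IndSub_eq_bot (fun k ↦ hr3 (φ k)) (hr3lim.comp hφ') hwh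
      (hφ'.eventually (hgY.mono fun k hk ↦ hk.1)) ?_
    have hinv : Tendsto (fun k ↦ (r (φ k) ^ 2)⁻¹ / 2) atTop atTop := by
      refine Tendsto.atTop_div_const two_pos (Tendsto.inv_tendsto_nhdsGT_zero
        (tendsto_nhdsWithin_iff.2 ⟨?_, Eventually.of_forall fun k ↦ pow_pos (hr (φ k)) 2⟩))
      simpa using (hr0.comp hφ').pow 2
    refine tendsto_atTop_mono' _ ?_ hinv
    filter_upwards [hξ] with k hk
    have hrk := hr (φ k)
    rw [hℓw, le_div_iff₀ (hr3 _)]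
    calc (r (φ k) ^ 2)⁻¹ / 2 * r (φ k) ^ 3 = r (φ k) / 2 := by field_simp
      _ ≤ r (φ k) + ξ (w (φ k), g (φ k)) := by linarith

end Multiplier

section QuadraticGain

variable {E F : Type*} [NormedAddCommGroup E] [NormedAddCommGroup F]

/-- Quadratic growth of the localized maximum at `x`: some `y ∈ Y x` within `κ * ‖x - xb‖` of `yb`
improves on `f (xb, yb)` by at least `μ * ‖x - xb‖ ^ 2`. Naming the point `y` avoids the junk value
of `maxVal` on an unbounded or empty set. -/
def QuadraticGainAt (f : E × F → ℝ) (Y : E → Set F) (xb : E) (yb : F) (κ μ : ℝ) (x : E) : Prop :=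
  ∃ y ∈ Y x ∩ closedBall yb (κ * ‖x - xb‖), f (xb, yb) + μ * ‖x - xb‖ ^ 2 ≤ f (x, y)

variable {f : E × F → ℝ} {X : Set E} {Y : E → Set F} {xb : E} {yb : F} {κ μ : ℝ}

theorem QuadraticGainAt.antitone (x : E) : Antitone (QuadraticGainAt f Y xb yb κ · x) := by
  rintro μ ν hμν ⟨y, hy, hfy⟩
  exact ⟨y, hy, le_trans (by gcongr) hfy⟩

theorem QuadraticGainAt.le_maxVal {x : E} {s : ℝ} (hx : QuadraticGainAt f Y xb yb κ μ x)
    (hκ : 0 ≤ κ) (hs : ‖x - xb‖ ≤ s)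
    (hf : BddAbove ((fun y ↦ f (x, y)) '' (Y x ∩ closedBall yb (κ * s)))) :
    f (xb, yb) + μ * ‖x - xb‖ ^ 2 ≤ maxVal f x (Y x ∩ closedBall yb (κ * s)) := by
  obtain ⟨y, hy, hfy⟩ := hx
  have hball : closedBall yb (κ * ‖x - xb‖) ⊆ closedBall yb (κ * s) := by gcongr
  exact hfy.trans (le_csSup hf ⟨y, ⟨hy.1, hball hy.2⟩, rfl⟩)

theorem eventually_forall_le_maxVal (hκ : 0 < κ) (hf : IsBoundedUnder (· ≤ ·) (𝓝 (xb, yb)) f)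
    (hgain : ∀ᶠ x in 𝓝 xb, x ∈ X → QuadraticGainAt f Y xb yb κ μ x) :
    ∀ᶠ δ in 𝓝[>] (0 : ℝ), ∀ x ∈ X ∩ closedBall xb δ, ∀ s ∈ Icc ‖x - xb‖ δ,
      f (xb, yb) + μ * ‖x - xb‖ ^ 2 ≤ maxVal f x (Y x ∩ closedBall yb (κ * s)) := by
  obtain ⟨C, hC⟩ := hf.eventually_le
  obtain ⟨ρ, hρ, hρC⟩ := nhds_basis_closedBall.eventually_iff.1 hC
  obtain ⟨η, hη, hηgain⟩ := nhds_basis_closedBall.eventually_iff.1 hgain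
  filter_upwards [Ioc_mem_nhdsGT hη, Ioc_mem_nhdsGT hρ, Ioc_mem_nhdsGT (div_pos hρ hκ)]
    with δ hδη hδρ hδκ x hx s hs
  refine (hηgain (closedBall_subset_closedBall hδη.2 hx.2) hx.1).le_maxVal hκ.le hs.1 ⟨C, ?_⟩
  rintro _ ⟨y, hy, rfl⟩
  have hκs : κ * s ≤ ρ :=
    calc κ * s ≤ κ * (ρ / κ) := by gcongr; exact hs.2.trans hδκ.2
      _ = ρ := mul_div_cancel₀ ρ hκ.ne'
  apply hρC
  rw [← closedBall_prod_same]
  exact ⟨closedBall_subset_closedBall hδρ.2 hx.2, closedBall_subset_closedBall hκs hy.2⟩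

end QuadraticGain

section Growth

variable {E F : Type*} [NormedAddCommGroup E] [NormedSpace ℝ E]
  [NormedAddCommGroup F] [NormedSpace ℝ F]

theorem exists_pos_eventually_of_forall_direction [ProperSpace E] {P : ℝ → E → Prop} {X : Set E}
    {z : E} (hP : ∀ x, Antitone (P · x))
    (hdir : ∀ u ≠ 0, ∀ (t : ℕ → ℝ) (w : ℕ → E), (∀ k, 0 < t k) → Tendsto t atTop (𝓝 0) →
      (∀ k, ‖w k‖ = 1) → Tendsto w atTop (𝓝 u) → (∀ k, z + t k • w k ∈ X) →
      ∃ μ > 0, ∀ᶠ k in atTop, P μ (z + t k • w k)) :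
    ∃ μ > 0, ∀ᶠ x in 𝓝 z, x ∈ X → x ≠ z → P μ x := by
  by_contra! hcon
  obtain ⟨ε, -, hε, hε0⟩ := exists_seq_strictAnti_tendsto (0 : ℝ)
  have hbad (k : ℕ) : ∃ x ∈ ball z (ε k), x ∈ X ∧ x ≠ z ∧ ¬P (ε k) x := by
    obtain ⟨x, hx, hxball⟩ := ((hcon _ (hε k)).and_eventually (ball_mem_nhds z (hε k))).exists
    exact ⟨x, hxball, hx⟩
  choose x hxball hxX hxz hxP using hbad
  have hnorm (k : ℕ) : 0 < ‖x k - z‖ := norm_sub_pos_iff.2 (hxz k)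
  have hsphere (k : ℕ) : ‖x k - z‖⁻¹ • (x k - z) ∈ sphere (0 : E) 1 := by
    rw [mem_sphere_zero_iff_norm, norm_smul_of_nonneg (inv_nonneg.2 (norm_nonneg _)),
      inv_mul_cancel₀ (hnorm k).ne']
  obtain ⟨u, hu, φ, hφ, hlim⟩ := (isCompact_sphere (0 : E) 1).tendsto_subseq hsphere
  have hεφ : Tendsto (ε ∘ φ) atTop (𝓝 0) := hε0.comp hφ.tendsto_atTop
  have hx (k : ℕ) : z + ‖x k - z‖ • ‖x k - z‖⁻¹ • (x k - z) = x k := by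
    rw [smul_inv_smul₀ (hnorm k).ne', add_sub_cancel]
  obtain ⟨μ, hμ, hgood⟩ := hdir u (ne_zero_of_mem_unit_sphere ⟨u, hu⟩)
    (fun k ↦ ‖x (φ k) - z‖) (fun k ↦ ‖x (φ k) - z‖⁻¹ • (x (φ k) - z)) (fun k ↦ hnorm _)
    (squeeze_zero (fun k ↦ (hnorm _).le) (fun k ↦ (mem_ball_iff_norm.1 (hxball _)).le) hεφ)
    (fun k ↦ mem_sphere_zero_iff_norm.1 (hsphere _)) hlim (fun k ↦ by rw [hx]; exact hxX _)
  obtain ⟨k, hk, hkμ⟩ := (hgood.and (hεφ.eventually_le_const hμ)).exists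
  rw [hx] at hk
  exact hxP _ (hP _ hkμ hk)

/-- The critical cone of the outer minimization: tangent directions `u` with
`max_{h ∈ DY(xb, yb)(u)} df(xb, yb)(u, h) = 0`. -/
def outerCriticalCone (f : E × F → ℝ) (X : Set E) (Y : E → Set F) (xb : E) (yb : F) : Set E :=
  tCone X xb ∩ {u | (⨆ h ∈ graphDeriv Y xb yb u, dsub f (xb, yb) (u, h)) = (0 : EReal)}

/-- The set `C(xb, yb; u)` of the directions of `DY(xb, yb)(u)` along which the subderivative of `f`
vanishes. -/
def innerCriticalSet (f : E × F → ℝ) (Y : E → Set F) (xb : E) (yb : F) (u : E) : Set F :=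
  graphDeriv Y xb yb u ∩ {h | dsub f (xb, yb) (u, h) = (0 : EReal)}

/-- The pair `(ℓ, ξ)` of linear functionals is a multiplier at the direction `u`: it plays the role
of the vectors `vᵘ` and `(ξ₁ᵘ, ξ₂ᵘ)` of condition (3). -/
structure IsMultiplier (f : E × F → ℝ) (Y : E → Set F) (xb : E) (yb : F) (u : E)
    (ℓ : E →L[ℝ] ℝ) (ξ : E × F →L[ℝ] ℝ) : Prop where
  map_direction : ℓ u = 0
  dsub_eq : ∀ p : E × F, dsub f (xb, yb) p = ((ℓ p.1 + ξ p : ℝ) : EReal)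
  d2IndSub_ne_bot : ∀ h ∈ innerCriticalSet f Y xb yb u,
    d2IndSub (gphSet Y) (fun p ↦ (dsub f (xb, yb) p).toReal) (xb, yb) (u, h) ≠ ⊥
  strongTwiceEpiDiffInd : StrongTwiceEpiDiffInd (gphSet Y) (xb, yb) ξ

variable {f : E × F → ℝ} {X : Set E} {Y : E → Set F} {xb u : E} {yb : F} {κ μ : ℝ}
  {ℓ : E →L[ℝ] ℝ} {ξ : E × F →L[ℝ] ℝ} {t : ℕ → ℝ} {w : ℕ → E}

theorem IsMultiplier.eq_zero [ProperSpace F] (hℓξ : IsMultiplier f Y xb yb u ℓ ξ)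
    (hyb : yb ∈ Y xb) (hcalm : SetCalmAround Y xb yb)
    (hle : ∀ h ∈ graphDeriv Y xb yb u, dsub f (xb, yb) (u, h) ≤ 0) : ℓ = 0 := by
  by_contra hℓ
  obtain ⟨h, hh, hξ, hbot⟩ := hℓξ.strongTwiceEpiDiffInd.exists_d2IndSub_eq_bot hyb hcalm hℓ
    hℓξ.map_direction
  have hcrit : h ∈ innerCriticalSet f Y xb yb u := by
    refine ⟨hh, (hle h hh).antisymm ?_⟩
    rw [hℓξ.dsub_eq, EReal.coe_nonneg, hℓξ.map_direction, zero_add]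
    exact hξ
  refine hℓξ.d2IndSub_ne_bot h hcrit ?_
  simpa only [hℓξ.dsub_eq, EReal.toReal_coe] using hbot

theorem IsMultiplier.strongTwiceEpiDiffInd_toReal_dsub (hξ : IsMultiplier f Y xb yb u 0 ξ) :
    StrongTwiceEpiDiffInd (gphSet Y) (xb, yb) fun p ↦ (dsub f (xb, yb) p).toReal := by
  have hdsub : (fun p ↦ (dsub f (xb, yb) p).toReal) = ξ := by
    funext p
    rw [hξ.dsub_eq, EReal.toReal_coe, zero_apply, zero_add]
  rw [hdsub]
  exact hξ.strongTwiceEpiDiffInd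

theorem eventually_quadraticGainAt {g : ℕ → F} {h : F} (ht : ∀ k, 0 < t k)
    (ht0 : Tendsto t atTop (𝓝 0)) (hw1 : ∀ k, ‖w k‖ = 1) (hw : Tendsto w atTop (𝓝 u))
    (hg : Tendsto g atTop (𝓝 h))
    (hκ : ∀ᶠ p in 𝓝 (xb, yb), p ∈ gphSet Y → ‖p.2 - yb‖ ≤ κ * ‖p.1 - xb‖)
    (hgain : ∀ᶠ k in atTop, (xb, yb) + t k • (w k, g k) ∈ gphSet Y ∧
      f (xb, yb) + μ * t k ^ 2 ≤ f ((xb, yb) + t k • (w k, g k))) :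
    ∀ᶠ k in atTop, QuadraticGainAt f Y xb yb κ μ (xb + t k • w k) := by
  have hlim : Tendsto (fun k ↦ (xb, yb) + t k • (w k, g k)) atTop (𝓝 (xb, yb)) := by
    simpa using (ht0.smul (hw.prodMk_nhds hg)).const_add (xb, yb)
  filter_upwards [hgain, hlim.eventually hκ] with k ⟨hmem, hfk⟩ hcalm
  have hnorm : ‖xb + t k • w k - xb‖ = t k := by
    rw [add_sub_cancel_left, norm_smul_of_nonneg (ht k).le, hw1, mul_one]
  refine ⟨yb + t k • g k, ⟨hmem, mem_closedBall_iff_norm.2 (hcalm hmem)⟩, ?_⟩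
  rw [hnorm]
  exact hfk

theorem eventually_quadraticGainAt_of_dsub_pos {h : F} (hpos : 0 < dsub f (xb, yb) (u, h))
    (hh : h ∈ innerDeriv Y xb yb u)
    (hκ : ∀ᶠ p in 𝓝 (xb, yb), p ∈ gphSet Y → ‖p.2 - yb‖ ≤ κ * ‖p.1 - xb‖)
    (ht : ∀ k, 0 < t k) (ht0 : Tendsto t atTop (𝓝 0)) (hw1 : ∀ k, ‖w k‖ = 1)
    (hw : Tendsto w atTop (𝓝 u)) (μ : ℝ) :
    ∀ᶠ k in atTop, QuadraticGainAt f Y xb yb κ μ (xb + t k • w k) := by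
  obtain ⟨g, hg, hgY⟩ := hh t w ht ht0 hw
  refine eventually_quadraticGainAt ht ht0 hw1 hw hg hκ ?_
  filter_upwards [(tendsto_quotFilter ht ht0 (hw.prodMk_nhds hg)).eventually
    (eventually_add_mul_sq_le_of_dsub_pos hpos μ)] with k hk
  exact ⟨hgY k, hk⟩

theorem exists_quadraticGainAt_of_d2IndSub_lt_d2sub {h : F}
    (hstrong : StrongTwiceEpiDiffInd (gphSet Y) (xb, yb) fun p ↦ (dsub f (xb, yb) p).toReal)
    (hlt : d2IndSub (gphSet Y) (fun p ↦ (dsub f (xb, yb) p).toReal) (xb, yb) (u, h) <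
      d2sub f (xb, yb) (u, h))
    (hκ : ∀ᶠ p in 𝓝 (xb, yb), p ∈ gphSet Y → ‖p.2 - yb‖ ≤ κ * ‖p.1 - xb‖)
    (ht : ∀ k, 0 < t k) (ht0 : Tendsto t atTop (𝓝 0)) (hw1 : ∀ k, ‖w k‖ = 1)
    (hw : Tendsto w atTop (𝓝 u)) :
    ∃ μ > 0, ∀ᶠ k in atTop, QuadraticGainAt f Y xb yb κ μ (xb + t k • w k) := by
  obtain ⟨g, hg, hquot⟩ := hstrong u h t w ht ht0 hw
  obtain ⟨μ, hμ, hgain⟩ := exists_eventually_add_mul_sq_le ht ht0 (hw.prodMk_nhds hg) hquot hlt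
  exact ⟨μ, hμ, eventually_quadraticGainAt ht ht0 hw1 hw hg hκ hgain⟩

theorem exists_eventually_quadraticGainAt [ProperSpace E] [ProperSpace F] (hyb : yb ∈ Y xb)
    (hsemi : SetSemidiffAt Y xb yb) (hcalm : SetCalmAround Y xb yb)
    (hκ : ∀ᶠ p in 𝓝 (xb, yb), p ∈ gphSet Y → ‖p.2 - yb‖ ≤ κ * ‖p.1 - xb‖)
    (hfirst : ∀ u ∈ tCone X xb, 0 ≤ ⨆ h ∈ graphDeriv Y xb yb u, dsub f (xb, yb) (u, h))
    (hsecond : ∀ u ∈ outerCriticalCone f X Y xb yb, u ≠ 0 →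
      ∃ ℓ ξ, IsMultiplier f Y xb yb u ℓ ξ ∧ ∃ h ∈ innerCriticalSet f Y xb yb u,
        0 < d2sub f (xb, yb) (u, h) + d2IndSub X (-ℓ) xb u -
          d2IndSub (gphSet Y) (fun p ↦ (dsub f (xb, yb) p).toReal) (xb, yb) (u, h)) :
    ∃ μ > 0, ∀ᶠ x in 𝓝 xb, x ∈ X → QuadraticGainAt f Y xb yb κ μ x := by
  suffices hne : ∃ μ > 0, ∀ᶠ x in 𝓝 xb, x ∈ X → x ≠ xb → QuadraticGainAt f Y xb yb κ μ x by
    obtain ⟨μ, hμ, hgain⟩ := hne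
    refine ⟨μ, hμ, hgain.mono fun x hx hxX ↦ ?_⟩
    obtain rfl | hxne := eq_or_ne x xb
    · exact ⟨yb, ⟨hyb, by simp⟩, by simp⟩
    · exact hx hxX hxne
  refine exists_pos_eventually_of_forall_direction QuadraticGainAt.antitone ?_
  intro u hu t w ht ht0 hw1 hw hX
  by_cases hpos : ∃ h ∈ graphDeriv Y xb yb u, 0 < dsub f (xb, yb) (u, h)
  · obtain ⟨h, hh, hpos⟩ := hpos
    rw [hsemi u] at hh
    exact ⟨1, one_pos, eventually_quadraticGainAt_of_dsub_pos hpos hh hκ ht ht0 hw1 hw 1⟩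
  · push Not at hpos
    have huX : u ∈ tCone X xb := ⟨t, w, ht, ht0, hw, hX⟩
    obtain ⟨ℓ, ξ, hℓξ, h, -, hgap⟩ :=
      hsecond u ⟨huX, (iSup₂_le hpos).antisymm (hfirst u huX)⟩ hu
    obtain rfl : ℓ = 0 := hℓξ.eq_zero hyb hcalm hpos
    have hXnonpos : d2IndSub X (-(0 : E →L[ℝ] ℝ)) xb u ≤ 0 :=
      d2IndSub_nonpos ht ht0 hw hX fun k ↦ by simp
    exact exists_quadraticGainAt_of_d2IndSub_lt_d2sub hℓξ.strongTwiceEpiDiffInd_toReal_dsub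
      (lt_of_pos_add_sub hXnonpos hgap) hκ ht ht0 hw1 hw

end Growth

section Minimax

variable {E F : Type*} [NormedAddCommGroup E] [NormedAddCommGroup F]
  {f : E × F → ℝ} {X : Set E} {Y : E → Set F} {xb : E} {yb : F} {κ δ : ℝ}

theorem isCalmLocalMinimaxPt_of_forall_le_maxVal (hxb : xb ∈ X) (hyb : yb ∈ Y xb) (hκ : 0 < κ)
    (hδ : 0 < δ) (hy : ∀ y ∈ Y xb ∩ closedBall yb δ, f (xb, y) ≤ f (xb, yb))
    (hx : ∀ x ∈ X ∩ closedBall xb δ, ∀ s ∈ Icc ‖x - xb‖ δ,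
      f (xb, yb) ≤ maxVal f x (Y x ∩ closedBall yb (κ * s))) :
    IsCalmLocalMinimaxPt f X Y xb yb := by
  -- The absolute value keeps the radius function nonnegative on the whole line.
  refine ⟨hxb, hyb, δ, hδ, fun s ↦ κ * |s|, fun s ↦ by positivity, ?_,
    ⟨κ, hκ, fun s hs ↦ (congrArg (κ * ·) (abs_of_nonneg hs)).le⟩, fun s hs x hxs y hys ↦ ⟨?_, ?_⟩⟩
  · have hcont : Continuous fun s : ℝ ↦ κ * |s| := by fun_prop
    simpa only [abs_zero, mul_zero] using (hcont.tendsto 0).mono_left nhdsWithin_le_nhds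
  · exact hy y ⟨hys.1, closedBall_subset_closedBall hs.2 hys.2⟩
  · simp only [abs_of_pos hs.1]
    exact hx x ⟨hxs.1, closedBall_subset_closedBall hs.2 hxs.2⟩ s
      ⟨mem_closedBall_iff_norm.1 hxs.2, hs.2⟩

theorem secondOrder_sufficient_calmLocalMinimax_general [NormedSpace ℝ E] [NormedSpace ℝ F]
    [ProperSpace E] [ProperSpace F]
    (hxb : xb ∈ X) (hyb : yb ∈ Y xb) (hf : IsBoundedUnder (· ≤ ·) (𝓝 (xb, yb)) f)
    (hsemi : SetSemidiffAt Y xb yb) (hcalm : SetCalmAround Y xb yb)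
    (hfirst : ∀ u ∈ tCone X xb, 0 ≤ ⨆ h ∈ graphDeriv Y xb yb u, dsub f (xb, yb) (u, h))
    (hsecond : ∀ u ∈ outerCriticalCone f X Y xb yb, u ≠ 0 →
      ∃ ℓ ξ, IsMultiplier f Y xb yb u ℓ ξ ∧ ∃ h ∈ innerCriticalSet f Y xb yb u,
        0 < d2sub f (xb, yb) (u, h) + d2IndSub X (-ℓ) xb u -
          d2IndSub (gphSet Y) (fun p ↦ (dsub f (xb, yb) p).toReal) (xb, yb) (u, h)) :
    IsCalmLocalMinimaxPt f X Y xb yb ∧ SecondOrderGrowth f X Y xb yb := by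
  obtain ⟨κ, hκ, hκY⟩ := hcalm.exists_eventually_norm_sub_le
  obtain ⟨μ, hμ, hgain⟩ := exists_eventually_quadraticGainAt hyb hsemi hcalm hκY hfirst hsecond
  obtain ⟨ρ, hρ, hiso⟩ := nhds_basis_closedBall.eventually_iff.1 (eventually_eq_of_calm hκY)
  obtain ⟨δ, hmax, hδ, hδρ⟩ :=
    ((eventually_forall_le_maxVal hκ hf hgain).and (Ioc_mem_nhdsGT hρ)).exists
  have hY : ∀ y ∈ Y xb ∩ closedBall yb δ, y = yb := fun y hy ↦
    hiso (closedBall_subset_closedBall hδρ hy.2) hy.1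
  refine ⟨isCalmLocalMinimaxPt_of_forall_le_maxVal hxb hyb hκ hδ (fun y hy ↦ by rw [hY y hy])
    fun x hx s hs ↦ (le_add_of_nonneg_right (by positivity)).trans (hmax x hx s hs),
    δ, hδ, 1, one_pos, μ, hμ, κ, hκ, fun x hx y hy ↦ ⟨by simp [hY y hy], ?_⟩⟩
  exact le_sub_iff_add_le.2 (hmax x hx _ ⟨le_rfl, mem_closedBall_iff_norm.1 hx.2⟩)

end Minimax

section InnerProduct

variable {E F : Type*} [NormedAddCommGroup E] [InnerProductSpace ℝ E]
  [NormedAddCommGroup F] [InnerProductSpace ℝ F]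
  {f : E × F → ℝ} {Y : E → Set F} {xb u v ξ₁ : E} {yb ξ₂ : F}

theorem d2IndVec_neg (S : Set E) (z v w : E) :
    d2IndVec S z (-v) w = d2IndSub S (-innerSL ℝ v) z w :=
  congrArg (d2IndSub S · z w) (funext fun w' ↦ inner_neg_left v w')

theorem isMultiplier_innerSL (hvu : ⟪v, u⟫ = (0 : ℝ))
    (hdf : ∀ (u' : E) (h' : F),
      ((⟪v, u'⟫ + ⟪ξ₁, u'⟫ + ⟪ξ₂, h'⟫ : ℝ) : EReal) = dsub f (xb, yb) (u', h'))
    (hfin : ∀ h ∈ innerCriticalSet f Y xb yb u,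
      d2IndSub (gphSet Y) (fun p ↦ (dsub f (xb, yb) p).toReal) (xb, yb) (u, h) ≠ ⊥)
    (hstrong : StrongTwiceEpiDiffInd (gphSet Y) (xb, yb) fun p ↦ ⟪ξ₁, p.1⟫ + ⟪ξ₂, p.2⟫) :
    IsMultiplier f Y xb yb u (innerSL ℝ v) ((innerSL ℝ ξ₁).coprod (innerSL ℝ ξ₂)) where
  map_direction := hvu
  dsub_eq := fun p ↦ by rw [← hdf p.1 p.2, add_assoc]; rfl
  d2IndSub_ne_bot := hfin
  strongTwiceEpiDiffInd := hstrong

end InnerProduct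

/-- Second-order sufficient optimality conditions for a calm local
minimax point of the couple-constrained minimax problem, with second-order growth. -/
theorem secondOrder_sufficient_calmLocalMinimax
    {n m : ℕ} (f : Eu n × Eu m → ℝ) (X : Set (Eu n)) (Y : Eu n → Set (Eu m))
    (xb : Eu n) (yb : Eu m) (hX : IsClosed X) (hY : ∀ x, IsClosed (Y x))
    (hxb : xb ∈ X) (hyb : yb ∈ Y xb)
    (hf : TwiceSemidiffAt f (xb, yb))
    (hsemi : SetSemidiffAt Y xb yb) (hcalm : SetCalmAround Y xb yb)
    -- (1) first-order conditions
    (h1x : ∀ u ∈ tCone X xb,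
      (0 : EReal) ≤ ⨆ h ∈ graphDeriv Y xb yb u, dsub f (xb, yb) (u, h))
    (h1y : ∀ h ∈ tCone (Y xb) yb, dsub (fun y => f (xb, y)) yb h ≤ (0 : EReal))
    -- (2) second-order sufficient condition for the inner maximization
    (h2 : ∀ h ∈ tCone (Y xb) yb ∩ {h' | dsub (fun y => f (xb, y)) yb h' = (0 : EReal)},
      h ≠ 0 →
      d2sub (fun y => f (xb, y)) yb h -
        d2IndSub (Y xb) (fun h' => (dsub (fun y => f (xb, y)) yb h').toReal) yb h <
      (0 : EReal))
    -- (3) existence (as functions of `u`) of the multiplier vectors and the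
    -- finiteness/strong twice epi-differentiability assumptions
    (v ξ₁ : Eu n → Eu n) (ξ₂ : Eu n → Eu m)
    (h3 : ∀ u ∈ tCone X xb ∩
        {u' | (⨆ h' ∈ graphDeriv Y xb yb u', dsub f (xb, yb) (u', h')) = (0 : EReal)},
      -(v u) ∈ limNCone X xb ∧ ⟪v u, u⟫ = (0 : ℝ) ∧
      (ξ₁ u, ξ₂ u) ∈ limNConeP (gphSet Y) (xb, yb) ∧
      (∀ (u' : Eu n) (h' : Eu m),
        ((⟪v u, u'⟫ + ⟪ξ₁ u, u'⟫ + ⟪ξ₂ u, h'⟫ : ℝ) : EReal) = dsub f (xb, yb) (u', h')) ∧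
      (d2IndVec X xb (-(v u)) u ≠ ⊤ ∧ d2IndVec X xb (-(v u)) u ≠ ⊥) ∧
      (∀ h ∈ graphDeriv Y xb yb u ∩ {h' | dsub f (xb, yb) (u, h') = (0 : EReal)},
        d2IndSub (gphSet Y) (fun w => (dsub f (xb, yb) w).toReal) (xb, yb) (u, h) ≠ ⊤ ∧
        d2IndSub (gphSet Y) (fun w => (dsub f (xb, yb) w).toReal) (xb, yb) (u, h) ≠ ⊥) ∧
      StrongTwiceEpiDiffInd (gphSet Y) (xb, yb)
        (fun w => ⟪ξ₁ u, w.1⟫ + ⟪ξ₂ u, w.2⟫))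
    -- (4) second-order sufficient condition for the outer minimization
    (h4 : ∀ u ∈ tCone X xb ∩
        {u' | (⨆ h' ∈ graphDeriv Y xb yb u', dsub f (xb, yb) (u', h')) = (0 : EReal)},
      u ≠ 0 →
      ∃ h ∈ graphDeriv Y xb yb u ∩ {h' | dsub f (xb, yb) (u, h') = (0 : EReal)},
        (0 : EReal) < d2sub f (xb, yb) (u, h) + d2IndVec X xb (-(v u)) u -
          d2IndSub (gphSet Y) (fun w => (dsub f (xb, yb) w).toReal) (xb, yb) (u, h)) :
    IsCalmLocalMinimaxPt f X Y xb yb ∧ SecondOrderGrowth f X Y xb yb := by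
  refine secondOrder_sufficient_calmLocalMinimax_general hxb hyb hf.1.isBoundedUnder_le hsemi hcalm
    h1x fun u hu hu0 ↦ ?_
  obtain ⟨-, hvu, -, hdf, -, hfin, hstrong⟩ := h3 u hu
  simp only [d2IndVec_neg] at h4
  exact ⟨_, _, isMultiplier_innerSL hvu hdf (fun h hh ↦ (hfin h hh).2) hstrong, h4 u hu hu0⟩
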